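/- Let I ⊆ ℝ be open, let W : I → Matrix N N ℂ be differentiable with W(t) invertible for all t ∈ I, and let D(y) = y''F₂ + y'F₁ + yF₀ be a second order differential operator with differentiable matrix coefficients on I satisfying F₂W = WF₂* and 2(F₂W)' = WF₁* + F₁W. Let P : I → Matrix N N ℂ be twice differentiable, invertible at every point of I, with D(P) = 0. Then the identity D(y) = [((y' − yP⁻¹P')F₂W)' + (y' − yP⁻¹P')F₂W(P⁻¹P')*]·W⁻¹ holds for every twice differentiable y : I → Matrix N N ℂ (that is, D = −(∂ − P⁻¹P')† ∘ F₂ ∘ (∂ − P⁻¹P')) if and only if ((1/2)F₁ + P⁻¹P'F₂)·W = W·((1/2)F₁ + P⁻¹P'F₂)* on I. -/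

import Mathlib

/-!
Write `U = P⁻¹P'` and `A = F₂W`. Since `PU = P'`, one has `P(U' + U²) = P''`, so `D(P) = 0` says
`F₀ = -(U' + U²)F₂ - UF₁`. Substituting this value of `F₀` and expanding by the product rule gives,
for every twice differentiable `y`, with `G = F₁W + UA - A' - AU*`,

  `D(y)W - [((y' - yU)A)' + (y' - yU)AU*] = (y' - yU)G`    (`defect_eq`).

By the two symmetry equations `WF₂* = A` and `2A' = WF₁* + F₁W`, the vanishing of `G` is exactly the
condition `(½F₁ + UF₂)W = W(½F₁ + UF₂)*` (`symmetry_iff`). Hence that condition gives the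
factorization; conversely `y(s) = (s - t)·1` has `y(t) = 0` and `y'(t) = 1`, so evaluating the
factorization of this `y` at `t` yields `G(t) = 0`.
-/

open Matrix

noncomputable section

abbrev Mat (N : ℕ) := Matrix (Fin N) (Fin N) ℂ

def matDeriv {N : ℕ} (f : ℝ → Mat N) : ℝ → Mat N :=
  fun t => Matrix.of fun i j => deriv (fun s => f s i j) t

def DiffOn {N : ℕ} (I : Set ℝ) (f : ℝ → Mat N) : Prop :=
  ∀ (i j : Fin N), ∀ t ∈ I, DifferentiableAt ℝ (fun s => f s i j) t

def TwiceDiffOn {N : ℕ} (I : Set ℝ) (f : ℝ → Mat N) : Prop :=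
  DiffOn I f ∧ DiffOn I (matDeriv f)

/-- `D(y) = y''F₂ + y'F₁ + yF₀` (acting on the right). -/
def secondOrd {N : ℕ} (F₀ F₁ F₂ : ℝ → Mat N) (y : ℝ → Mat N) : ℝ → Mat N :=
  fun t => matDeriv (matDeriv y) t * F₂ t + matDeriv y t * F₁ t + y t * F₀ t

/-- Entrywise differentiability at a point. -/
def MDiffAt {N : ℕ} (f : ℝ → Mat N) (t : ℝ) : Prop :=
  ∀ i j, DifferentiableAt ℝ (fun s => f s i j) t

lemma MDiffAt.mul {N : ℕ} {f g : ℝ → Mat N} {t : ℝ} (hf : MDiffAt f t) (hg : MDiffAt g t) :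
    MDiffAt (fun s => f s * g s) t := by
  intro i j
  simp only [Matrix.mul_apply]
  exact DifferentiableAt.fun_sum fun k _ => (hf i k).mul (hg k j)

lemma MDiffAt.sub {N : ℕ} {f g : ℝ → Mat N} {t : ℝ} (hf : MDiffAt f t) (hg : MDiffAt g t) :
    MDiffAt (fun s => f s - g s) t :=
  fun i j => (hf i j).sub (hg i j)

lemma matDeriv_mul {N : ℕ} {f g : ℝ → Mat N} {t : ℝ} (hf : MDiffAt f t) (hg : MDiffAt g t) :
    matDeriv (fun s => f s * g s) t = matDeriv f t * g t + f t * matDeriv g t := by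
  ext i j
  simp only [matDeriv, Matrix.of_apply, Matrix.add_apply, Matrix.mul_apply]
  rw [deriv_fun_sum fun k _ => (hf i k).fun_mul (hg k j), ← Finset.sum_add_distrib]
  exact Finset.sum_congr rfl fun k _ => deriv_fun_mul (hf i k) (hg k j)

lemma matDeriv_sub {N : ℕ} {f g : ℝ → Mat N} {t : ℝ} (hf : MDiffAt f t) (hg : MDiffAt g t) :
    matDeriv (fun s => f s - g s) t = matDeriv f t - matDeriv g t := by
  ext i j
  exact deriv_fun_sub (hf i j) (hg i j)

lemma matDeriv_congr {N : ℕ} {I : Set ℝ} (hI : IsOpen I) {f g : ℝ → Mat N}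
    (h : ∀ s ∈ I, f s = g s) {t : ℝ} (ht : t ∈ I) : matDeriv f t = matDeriv g t := by
  ext i j
  refine Filter.EventuallyEq.deriv_eq ?_
  filter_upwards [hI.mem_nhds ht] with s hs
  rw [h s hs]

lemma MDiffAt.det {N : ℕ} {f : ℝ → Mat N} {t : ℝ} (hf : MDiffAt f t) :
    DifferentiableAt ℝ (fun s => (f s).det) t := by
  simp only [Matrix.det_apply]
  refine DifferentiableAt.fun_sum fun σ _ => ?_
  exact (DifferentiableAt.fun_finsetProd fun k _ => hf (σ k) k).const_smul (Equiv.Perm.sign σ)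

/-- Differentiability of the inverse, from Cramer's rule. -/
lemma MDiffAt.inv {N : ℕ} {f : ℝ → Mat N} {t : ℝ} (hf : MDiffAt f t) (hu : IsUnit (f t)) :
    MDiffAt (fun s => (f s)⁻¹) t := by
  intro i j
  have hd : (f t).det ≠ 0 := ((Matrix.isUnit_iff_isUnit_det _).1 hu).ne_zero
  simp only [Matrix.inv_def, Matrix.smul_apply, smul_eq_mul, Ring.inverse_eq_inv',
    Matrix.adjugate_apply]
  refine (hf.det.inv hd).mul (MDiffAt.det fun k l => ?_)
  by_cases hk : k = j
  · subst hk
    simp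
  · simpa [Matrix.updateRow_ne hk] using hf k l

/-- `U = P⁻¹P'` satisfies the Riccati-type identity `P'' = P(U' + U²)`. -/
lemma second_deriv_eq {N : ℕ} {I : Set ℝ} (hI : IsOpen I) {P : ℝ → Mat N}
    (hP : TwiceDiffOn I P) (hPinv : ∀ t ∈ I, IsUnit (P t)) {t : ℝ} (ht : t ∈ I) :
    matDeriv (matDeriv P) t = P t * (matDeriv (fun s => (P s)⁻¹ * matDeriv P s) t
      + ((P t)⁻¹ * matDeriv P t) * ((P t)⁻¹ * matDeriv P t)) := by
  have hPt : MDiffAt P t := fun i j => hP.1 i j t ht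
  have hP't : MDiffAt (matDeriv P) t := fun i j => hP.2 i j t ht
  have hcancel : ∀ s ∈ I, P s * ((P s)⁻¹ * matDeriv P s) = matDeriv P s := fun s hs =>
    Matrix.mul_nonsing_inv_cancel_left _ _ ((Matrix.isUnit_iff_isUnit_det _).1 (hPinv s hs))
  rw [← matDeriv_congr hI hcancel ht, matDeriv_mul hPt ((hPt.inv (hPinv t ht)).mul hP't),
    mul_add, ← mul_assoc (P t) ((P t)⁻¹ * matDeriv P t), hcancel t ht, add_comm]

/-- The defect of the factorization is `y' - yP⁻¹P'` times a matrix function independent of `y`. -/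
lemma defect_eq {N : ℕ} {I : Set ℝ} (hI : IsOpen I) {W F₀ F₁ F₂ P : ℝ → Mat N}
    (hWdiff : DiffOn I W) (hF₂ : DiffOn I F₂)
    (hP : TwiceDiffOn I P) (hPinv : ∀ t ∈ I, IsUnit (P t))
    (hPker : ∀ t ∈ I, secondOrd F₀ F₁ F₂ P t = 0)
    {y : ℝ → Mat N} (hy : TwiceDiffOn I y) {t : ℝ} (ht : t ∈ I) :
    secondOrd F₀ F₁ F₂ y t * W t
      - (matDeriv (fun s =>
            (matDeriv y s - y s * ((P s)⁻¹ * matDeriv P s)) * F₂ s * W s) t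
          + (matDeriv y t - y t * ((P t)⁻¹ * matDeriv P t)) * F₂ t * W t
              * ((P t)⁻¹ * matDeriv P t)ᴴ)
      = (matDeriv y t - y t * ((P t)⁻¹ * matDeriv P t))
        * (F₁ t * W t + (P t)⁻¹ * matDeriv P t * F₂ t * W t - matDeriv (fun s => F₂ s * W s) t
          - F₂ t * W t * ((P t)⁻¹ * matDeriv P t)ᴴ) := by
  have hPt : MDiffAt P t := fun i j => hP.1 i j t ht
  have hP't : MDiffAt (matDeriv P) t := fun i j => hP.2 i j t ht
  have hyt : MDiffAt y t := fun i j => hy.1 i j t ht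
  have hy't : MDiffAt (matDeriv y) t := fun i j => hy.2 i j t ht
  have hUt : MDiffAt (fun s => (P s)⁻¹ * matDeriv P s) t := (hPt.inv (hPinv t ht)).mul hP't
  have hAt : MDiffAt (fun s => F₂ s * W s) t :=
    MDiffAt.mul (fun i j => hF₂ i j t ht) (fun i j => hWdiff i j t ht)
  have hdet := (Matrix.isUnit_iff_isUnit_det _).1 (hPinv t ht)
  have hR := second_deriv_eq hI hP hPinv ht
  have hP1 : matDeriv P t = P t * ((P t)⁻¹ * matDeriv P t) :=
    (Matrix.mul_nonsing_inv_cancel_left _ _ hdet).symm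
  have hk := hPker t ht
  simp only [mul_assoc (_ - _) (F₂ _) (W _)]
  rw [matDeriv_mul (hy't.sub (hyt.mul hUt)) hAt, matDeriv_sub hy't (hyt.mul hUt),
    matDeriv_mul hyt hUt]
  simp only [secondOrd] at hk ⊢
  generalize matDeriv (fun s => (P s)⁻¹ * matDeriv P s) t = U' at *
  generalize matDeriv (fun s => F₂ s * W s) t = A' at *
  rw [hR] at hk
  generalize (P t)⁻¹ * matDeriv P t = U at *
  rw [hP1] at hk
  have hF₀ : F₀ t = -((U' + U * U) * F₂ t + U * F₁ t) := by
    refine eq_neg_of_add_eq_zero_right ((hPinv t ht).mul_left_cancel ?_)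
    rw [mul_zero, ← hk]
    noncomm_ring
  rw [hF₀]
  noncomm_ring

/-- Under the two symmetry equations (`a` stands for `(F₂W)'`), the third condition is the vanishing
of the matrix function in `defect_eq`. -/
lemma symmetry_iff {N : ℕ} {w f₁ f₂ u a : Mat N} (h1 : f₂ * w = w * f₂ᴴ)
    (h2 : (2 : ℂ) • a = w * f₁ᴴ + f₁ * w) :
    ((1 / 2 : ℂ) • f₁ + u * f₂) * w = w * ((1 / 2 : ℂ) • f₁ + u * f₂)ᴴ
      ↔ f₁ * w + u * f₂ * w - a - f₂ * w * uᴴ = 0 := by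
  have ha : a = (1 / 2 : ℂ) • (w * f₁ᴴ) + (1 / 2 : ℂ) • (f₁ * w) := by
    rw [← smul_add, ← h2, smul_smul]
    norm_num
  have hhalf : f₁ * w = (1 / 2 : ℂ) • (f₁ * w) + (1 / 2 : ℂ) • (f₁ * w) := by
    rw [← add_smul]
    norm_num
  have hstar : star (1 / 2 : ℂ) = 1 / 2 := by simp
  have key : f₁ * w + u * f₂ * w - a - f₂ * w * uᴴ
      = ((1 / 2 : ℂ) • f₁ + u * f₂) * w - w * ((1 / 2 : ℂ) • f₁ + u * f₂)ᴴ := by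
    rw [Matrix.conjTranspose_add, Matrix.conjTranspose_smul, Matrix.conjTranspose_mul, hstar,
      add_mul, mul_add, Matrix.smul_mul, Matrix.mul_smul, ← mul_assoc w, ← h1, ha]
    nth_rewrite 1 [hhalf]
    abel
  rw [key, sub_eq_zero]

/-- Let `D(y) = y''F₂ + y'F₁ + yF₀` satisfy the first two symmetry
equations with respect to an invertible `W`, and let `P` be invertible with `D(P) = 0`.
Then `D` admits the self-adjoint factorization
`D = −(∂ − P⁻¹P')† ∘ F₂ ∘ (∂ − P⁻¹P')`, i.e.
`D(y) = [((y' − yP⁻¹P')F₂W)' + (y' − yP⁻¹P')F₂W(P⁻¹P')*]·W⁻¹` for every twice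
differentiable `y`, if and only if `((1/2)F₁ + P⁻¹P'F₂)W = W((1/2)F₁ + P⁻¹P'F₂)*` on `I`. -/
theorem self_adjoint_factorization_iff
    (N : ℕ) (I : Set ℝ) (hI : IsOpen I)
    (W : ℝ → Mat N)
    (hWdiff : DiffOn I W)
    (hWinv : ∀ t ∈ I, IsUnit (W t))
    (F₀ F₁ F₂ : ℝ → Mat N)
    (hF₀ : DiffOn I F₀) (hF₁ : DiffOn I F₁) (hF₂ : DiffOn I F₂)
    (heq1 : ∀ t ∈ I, F₂ t * W t = W t * (F₂ t)ᴴ)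
    (heq2 : ∀ t ∈ I, (2 : ℂ) • matDeriv (fun s => F₂ s * W s) t
        = W t * (F₁ t)ᴴ + F₁ t * W t)
    (P : ℝ → Mat N)
    (hP : TwiceDiffOn I P)
    (hPinv : ∀ t ∈ I, IsUnit (P t))
    (hPker : ∀ t ∈ I, secondOrd F₀ F₁ F₂ P t = 0) :
    (∀ y : ℝ → Mat N, TwiceDiffOn I y → ∀ t ∈ I,
      secondOrd F₀ F₁ F₂ y t
        = (matDeriv (fun s =>
              (matDeriv y s - y s * ((P s)⁻¹ * matDeriv P s)) * F₂ s * W s) t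
            + (matDeriv y t - y t * ((P t)⁻¹ * matDeriv P t)) * F₂ t * W t
                * ((P t)⁻¹ * matDeriv P t)ᴴ) * (W t)⁻¹)
    ↔ (∀ t ∈ I,
        ((1 / 2 : ℂ) • F₁ t + (P t)⁻¹ * matDeriv P t * F₂ t) * W t
          = W t * ((1 / 2 : ℂ) • F₁ t + (P t)⁻¹ * matDeriv P t * F₂ t)ᴴ) := by
  have hdet : ∀ t ∈ I, IsUnit (W t).det := fun t ht =>
    (Matrix.isUnit_iff_isUnit_det _).1 (hWinv t ht)
  constructor
  · intro h t ht
    rw [symmetry_iff (heq1 t ht) (heq2 t ht)]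
    -- the test function `y(s) = (s - t)·1`, with `y(t) = 0` and `y'(t) = 1`
    let y : ℝ → Mat N := fun s => ((s - t : ℝ) : ℂ) • (1 : Mat N)
    have hentry : ∀ (i j : Fin N) (s : ℝ),
        HasDerivAt (fun r => y r i j) ((1 : Mat N) i j) s := by
      intro i j s
      have h0 : HasDerivAt (fun r : ℝ => ((r - t : ℝ) : ℂ)) ((1 : ℝ) : ℂ) s :=
        ((hasDerivAt_id s).sub_const t).ofReal_comp
      simpa [y] using h0.mul_const ((1 : Mat N) i j)
    have hy' : matDeriv y = fun _ => 1 := by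
      funext s
      ext i j
      exact (hentry i j s).deriv
    have hy : TwiceDiffOn I y := by
      refine ⟨fun i j s _ => (hentry i j s).differentiableAt, fun i j s _ => ?_⟩
      rw [hy']
      exact differentiableAt_const _
    have hyt : y t = 0 := by simp [y]
    have hd := defect_eq hI hWdiff hF₂ hP hPinv hPker hy ht
    rw [h y hy t ht, Matrix.nonsing_inv_mul_cancel_right _ _ (hdet t ht), sub_self, hyt, hy',
      zero_mul, sub_zero, one_mul] at hd
    exact hd.symm
  · intro h y hy t ht
    have hd := defect_eq hI hWdiff hF₂ hP hPinv hPker hy ht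
    rw [(symmetry_iff (heq1 t ht) (heq2 t ht)).1 (h t ht), mul_zero, sub_eq_zero] at hd
    rw [← hd, Matrix.mul_nonsing_inv_cancel_right _ _ (hdet t ht)]
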